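/- arXiv:math/9912092 — 5 statements merged into one kernel-verified Lean document; each statement's English description precedes it below -/
import Mathlib

section
/- Let d, m ∈ ℚ and let r₁, …, r_s ∈ ℚ be a finite family with Σᵢ rᵢ = d − m. Write p_j = Σᵢ rᵢ^j for j = 3, 4, 5. Let Q ∈ ℚ[H] be the unique polynomial with Q(0) = 0 whose derivative equals −(m³/2)·e(−dH)·H²·∏ᵢ(1 + rᵢH + rᵢ²H²/2). Then Q ≡ −( m³H³/6 − m⁴H⁴/8 + m⁵H⁵/20 − m³(m³ + p₃)H⁶/72 + m³(m⁴ + 4m·p₃ + 3p₄)H⁷/336 − m³(m⁵ + 10m²·p₃ + 15m·p₄ + 6p₅)H⁸/1920 ) (mod H⁹). (This is the explicit expansion asserted in Proposition 3.1 of the paper, giving the correction term to the adjusted predegree polynomial due to a line of multiplicity m in a degree-d plane curve.) -/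
open Polynomial

/-- The truncated exponential `e(dH) = ∑_{i=0}^{8} dⁱHⁱ/i!` in `ℚ[H]`. -/
noncomputable def eH (d : ℚ) : Polynomial ℚ :=
  ∑ i ∈ Finset.range 9, C (d ^ i / (Nat.factorial i : ℚ)) * X ^ i

theorem coeff_mul_quad (f : Polynomial ℚ) (a b : ℚ) :
    (f * (1 + C a * X + C b * X ^ 2)).coeff 0 = f.coeff 0 ∧
    (f * (1 + C a * X + C b * X ^ 2)).coeff 1 = f.coeff 1 + a * f.coeff 0 ∧
    ∀ n, (f * (1 + C a * X + C b * X ^ 2)).coeff (n + 2)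
      = f.coeff (n + 2) + a * f.coeff (n + 1) + b * f.coeff n := by
  have h : f * (1 + C a * X + C b * X ^ 2) = f + C a * (f * X) + C b * (f * X ^ 2) := by ring
  rw [h]
  refine ⟨?_, ?_, fun n => ?_⟩
  · simp
  · have h1 := coeff_mul_X f 0
    simp [coeff_mul_X_pow'] at h1 ⊢
  · have h1 := coeff_mul_X f (n + 1)
    have h2 := coeff_mul_X_pow f 2 n
    simp only [coeff_add, coeff_C_mul]
    rw [h2, h1]

theorem prod_coeffs {ι : Type*} (s : Finset ι) (r : ι → ℚ) (P : Polynomial ℚ)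
    (hP : P = ∏ i ∈ s, (1 + C (r i) * X + C ((r i) ^ 2 / 2) * X ^ 2))
    (p1 p3 p4 p5 : ℚ) (h1 : p1 = ∑ i ∈ s, r i) (h3 : p3 = ∑ i ∈ s, r i ^ 3)
    (h4 : p4 = ∑ i ∈ s, r i ^ 4) (h5 : p5 = ∑ i ∈ s, r i ^ 5) :
    P.coeff 0 = 1 ∧ P.coeff 1 = p1 ∧ P.coeff 2 = p1 ^ 2 / 2 ∧
    P.coeff 3 = p1 ^ 3 / 6 - p3 / 6 ∧
    P.coeff 4 = p1 ^ 4 / 24 - p1 * p3 / 6 + p4 / 8 ∧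
    P.coeff 5 = p1 ^ 5 / 120 - p1 ^ 2 * p3 / 12 + p1 * p4 / 8 - p5 / 20 := by
  classical
  induction s using Finset.induction_on generalizing P p1 p3 p4 p5 with
  | empty =>
    simp at hP h1 h3 h4 h5
    subst hP h1 h3 h4 h5
    simp [coeff_one]
  | insert a s ha ih =>
    rw [Finset.sum_insert ha] at h1 h3 h4 h5
    rw [Finset.prod_insert ha, mul_comm] at hP
    obtain ⟨c0, c1, c2, c3, c4, c5⟩ := ih _ rfl _ _ _ _ rfl rfl rfl rfl
    obtain ⟨q0, q1, q⟩ := coeff_mul_quad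
      (∏ i ∈ s, (1 + C (r i) * X + C ((r i) ^ 2 / 2) * X ^ 2)) (r a) (r a ^ 2 / 2)
    have q2 := q 0
    have q3 := q 1
    have q4 := q 2
    have q5 := q 3
    norm_num only at q2 q3 q4 q5
    rw [← hP] at q0 q1 q2 q3 q4 q5
    rw [q0, q1, q2, q3, q4, q5, c0, c1, c2, c3, c4, c5, h1, h3, h4, h5]
    refine ⟨rfl, ?_, ?_, ?_, ?_, ?_⟩ <;> ring

theorem eH_coeff (d : ℚ) (k : ℕ) (hk : k < 9) :
    (eH d).coeff k = d ^ k / (Nat.factorial k : ℚ) := by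
  simp only [eH, finset_sum_coeff, coeff_C_mul, coeff_X_pow, mul_ite, mul_one, mul_zero]
  rw [Finset.sum_ite_eq]
  simp [hk]

/-- Proposition 3.1: the explicit expansion, modulo `H⁹`, of the antiderivative with zero
constant term of `−(m³/2)·e(−dH)·H²·∏ᵢ(1 + rᵢH + rᵢ²H²/2)`. -/
theorem stmt_0 {ι : Type*} [Fintype ι] (d m : ℚ) (r : ι → ℚ)
    (hsum : ∑ i, r i = d - m)
    (Q : Polynomial ℚ) (hQ0 : Q.coeff 0 = 0)
    (hQder : derivative Q =
      C (-(m ^ 3 / 2)) * eH (-d) * X ^ 2 *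
        ∏ i, (1 + C (r i) * X + C ((r i) ^ 2 / 2) * X ^ 2)) :
    ∀ k ≤ 8, Q.coeff k =
      (-(C (m ^ 3 / 6) * X ^ 3 - C (m ^ 4 / 8) * X ^ 4 + C (m ^ 5 / 20) * X ^ 5
        - C (m ^ 3 * (m ^ 3 + ∑ i, (r i) ^ 3) / 72) * X ^ 6
        + C (m ^ 3 * (m ^ 4 + 4 * m * (∑ i, (r i) ^ 3) + 3 * (∑ i, (r i) ^ 4)) / 336) * X ^ 7
        - C (m ^ 3 * (m ^ 5 + 10 * m ^ 2 * (∑ i, (r i) ^ 3) + 15 * m * (∑ i, (r i) ^ 4)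
            + 6 * (∑ i, (r i) ^ 5)) / 1920) * X ^ 8)).coeff k := by
  obtain ⟨c0, c1, c2, c3, c4, c5⟩ := prod_coeffs Finset.univ r _ rfl _ _ _ _ rfl rfl rfl rfl
  set P := ∏ i, (1 + C (r i) * X + C ((r i) ^ 2 / 2) * X ^ 2) with hP
  rw [hsum] at c1 c2 c3 c4 c5
  generalize (∑ i, r i ^ 3) = p3 at *
  generalize (∑ i, r i ^ 4) = p4 at *
  generalize (∑ i, r i ^ 5) = p5 at *
  have hd : derivative Q = C (-(m ^ 3 / 2)) * (eH (-d) * P * X ^ 2) := by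
    rw [hQder]; ring
  have key : ∀ n, Q.coeff (n + 1) * ((n : ℚ) + 1)
      = -(m ^ 3 / 2) * (eH (-d) * P * X ^ 2).coeff n := by
    intro n
    rw [← coeff_derivative, hd, coeff_C_mul]
  have k0 := key 0
  have k1 := key 1
  have key2 : ∀ n, Q.coeff (n + 3) * ((n : ℚ) + 3)
      = -(m ^ 3 / 2) * (eH (-d) * P).coeff n := by
    intro n
    have := key (n + 2)
    rw [coeff_mul_X_pow] at this
    rw [← this]
    push_cast
    ring
  have l0 := key2 0
  have l1 := key2 1
  have l2 := key2 2
  have l3 := key2 3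
  have l4 := key2 4
  have l5 := key2 5
  have e0 := eH_coeff (-d) 0 (by norm_num)
  have e1 := eH_coeff (-d) 1 (by norm_num)
  have e2 := eH_coeff (-d) 2 (by norm_num)
  have e3 := eH_coeff (-d) 3 (by norm_num)
  have e4 := eH_coeff (-d) 4 (by norm_num)
  have e5 := eH_coeff (-d) 5 (by norm_num)
  simp only [coeff_mul_X_pow'] at k0 k1
  norm_num at k0 k1
  simp only [coeff_mul, Finset.Nat.sum_antidiagonal_eq_sum_range_succ_mk,
    Finset.sum_range_succ, Finset.sum_range_zero, Nat.reduceSub, Nat.sub_zero, Nat.sub_self,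
    Nat.reduceAdd, e0, e1, e2, e3, e4, e5,
    c0, c1, c2, c3, c4, c5, Nat.factorial] at l0 l1 l2 l3 l4 l5
  push_cast at l0 l1 l2 l3 l4 l5
  intro k hk
  simp only [coeff_neg, coeff_add, coeff_sub, coeff_C_mul, coeff_X_pow]
  interval_cases k <;> norm_num only [if_true, if_false]
  · simpa using hQ0
  · simpa using k0
  · simpa using k1
  · linear_combination l0 / 3
  · linear_combination l1 / 4
  · linear_combination l2 / 5
  · linear_combination l3 / 6
  · linear_combination l4 / 7
  · linear_combination l5 / 8
end

section
/- For every natural number d, one has (viewing d as a rational number in the coefficients) e(dH)·( 1 − dH³/6 + dH⁴/8 − dH⁵/20 − d²(d−3)(d³ + 3d² − 11d + 12)H⁶/720 + d³(2d⁴ − 35d² + 70d − 42)H⁷/1680 − d⁴(d⁴ − 16d² + 30d − 16)H⁸/1920 ) ≡ 1 + dH + d²H²/2 + d(d−1)(d+1)H³/6 + d(d−1)(d² + d − 3)H⁴/24 + d(d−1)(d−2)(d² + 3d − 3)H⁵/120 (mod H⁹); moreover, this last polynomial agrees with (1 + H + H²/2)^d in every coefficient of Hⁱ for i ≤ 5.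 (This is the computation of Example 3.3 of the paper: the adjusted predegree polynomial of a star of d distinct concurrent lines.) -/
open Polynomial

theorem coeff_step (p : ℚ[X]) (k : ℕ) :
    (p * (1 + X + C (1 / 2 : ℚ) * X ^ 2)).coeff (k + 2)
      = p.coeff (k + 2) + p.coeff (k + 1) + p.coeff k / 2 := by
  have h : p * (1 + X + C (1 / 2 : ℚ) * X ^ 2) = p + p * X + C (1 / 2 : ℚ) * (p * X ^ 2) := by
    ring
  rw [h, coeff_add, coeff_add, coeff_C_mul, coeff_mul_X_pow, coeff_mul_X]
  ring

theorem coeff_step_zero (p : ℚ[X]) :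
    (p * (1 + X + C (1 / 2 : ℚ) * X ^ 2)).coeff 0 = p.coeff 0 := by
  simp [mul_coeff_zero]

theorem coeff_step_one (p : ℚ[X]) :
    (p * (1 + X + C (1 / 2 : ℚ) * X ^ 2)).coeff 1 = p.coeff 1 + p.coeff 0 := by
  have h : p * (1 + X + C (1 / 2 : ℚ) * X ^ 2) = p + (p + C (1 / 2 : ℚ) * p * X) * X := by
    ring
  rw [h, coeff_add, coeff_mul_X]
  simp [mul_coeff_zero]

theorem pow_coeffs (d : ℕ) (P : ℚ[X]) (hP : P = (1 + X + C (1 / 2 : ℚ) * X ^ 2) ^ d) :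
    P.coeff 0 = 1 ∧ P.coeff 1 = d ∧ P.coeff 2 = (d : ℚ) ^ 2 / 2
    ∧ P.coeff 3 = (d : ℚ) * ((d : ℚ) - 1) * ((d : ℚ) + 1) / 6
    ∧ P.coeff 4 = (d : ℚ) * ((d : ℚ) - 1) * ((d : ℚ) ^ 2 + (d : ℚ) - 3) / 24
    ∧ P.coeff 5 =
      (d : ℚ) * ((d : ℚ) - 1) * ((d : ℚ) - 2) * ((d : ℚ) ^ 2 + 3 * (d : ℚ) - 3) / 120 := by
  induction d generalizing P with
  | zero => subst hP; simp [coeff_one]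
  | succ n ih =>
    obtain ⟨h0, h1, h2, h3, h4, h5⟩ := ih _ rfl
    rw [pow_succ] at hP
    subst hP
    rw [coeff_step_zero, coeff_step_one, coeff_step _ 0, coeff_step _ 1, coeff_step _ 2,
      coeff_step _ 3]
    norm_num only [h0, h1, h2, h3, h4, h5]
    push_cast
    refine ⟨trivial, ?_, ?_, ?_, ?_, ?_⟩ <;> ring

/-- Example 3.3: the adjusted predegree polynomial of a star of `d` distinct concurrent
lines, and its identification with the truncation of `(1 + H + H²/2)^d` at `H⁵`. -/
theorem stmt_7 (d : ℕ) :
    (∀ k ≤ 8,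
      (eH (d : ℚ) * (1 - C ((d : ℚ) / 6) * X ^ 3 + C ((d : ℚ) / 8) * X ^ 4
          - C ((d : ℚ) / 20) * X ^ 5
          - C ((d : ℚ) ^ 2 * ((d : ℚ) - 3) * ((d : ℚ) ^ 3 + 3 * (d : ℚ) ^ 2 - 11 * (d : ℚ)
              + 12) / 720) * X ^ 6
          + C ((d : ℚ) ^ 3 * (2 * (d : ℚ) ^ 4 - 35 * (d : ℚ) ^ 2 + 70 * (d : ℚ) - 42) / 1680)
            * X ^ 7
          - C ((d : ℚ) ^ 4 * ((d : ℚ) ^ 4 - 16 * (d : ℚ) ^ 2 + 30 * (d : ℚ) - 16) / 1920)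
            * X ^ 8)).coeff k
      = (1 + C (d : ℚ) * X + C ((d : ℚ) ^ 2 / 2) * X ^ 2
          + C ((d : ℚ) * ((d : ℚ) - 1) * ((d : ℚ) + 1) / 6) * X ^ 3
          + C ((d : ℚ) * ((d : ℚ) - 1) * ((d : ℚ) ^ 2 + (d : ℚ) - 3) / 24) * X ^ 4
          + C ((d : ℚ) * ((d : ℚ) - 1) * ((d : ℚ) - 2) * ((d : ℚ) ^ 2 + 3 * (d : ℚ) - 3) / 120)
            * X ^ 5).coeff k)
    ∧ (∀ k ≤ 5,
      (1 + C (d : ℚ) * X + C ((d : ℚ) ^ 2 / 2) * X ^ 2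
          + C ((d : ℚ) * ((d : ℚ) - 1) * ((d : ℚ) + 1) / 6) * X ^ 3
          + C ((d : ℚ) * ((d : ℚ) - 1) * ((d : ℚ) ^ 2 + (d : ℚ) - 3) / 24) * X ^ 4
          + C ((d : ℚ) * ((d : ℚ) - 1) * ((d : ℚ) - 2) * ((d : ℚ) ^ 2 + 3 * (d : ℚ) - 3) / 120)
            * X ^ 5).coeff k
      = ((1 + X + C (1 / 2 : ℚ) * X ^ 2) ^ d).coeff k) := by
  constructor
  · intro k hk
    have he : ∀ i, (eH (d : ℚ)).coeff i = if i < 9 then (d : ℚ) ^ i / (Nat.factorial i : ℚ)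
        else 0 := by
      intro i
      simp [eH, coeff_X_pow]
    rw [coeff_mul, Finset.Nat.sum_antidiagonal_eq_sum_range_succ_mk]
    interval_cases k <;>
      simp [Finset.sum_range_succ, he, coeff_X, coeff_one, coeff_X_pow, Nat.factorial,
        -map_div₀, -map_mul, -map_sub, -map_add, -map_pow, -map_natCast] <;> ring
  · intro k hk
    obtain ⟨h0, h1, h2, h3, h4, h5⟩ := pow_coeffs d _ rfl
    interval_cases k
    · rw [h0]; simp
    · rw [h1]; simp [coeff_X, coeff_one, coeff_X_pow, -map_div₀, -map_mul, -map_sub, -map_add, -map_pow, -map_natCast]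
    · rw [h2]; simp [coeff_X, coeff_one, coeff_X_pow, -map_div₀, -map_mul, -map_sub, -map_add, -map_pow, -map_natCast]
    · rw [h3]; simp [coeff_X, coeff_one, coeff_X_pow, -map_div₀, -map_mul, -map_sub, -map_add, -map_pow, -map_natCast]
    · rw [h4]; simp [coeff_X, coeff_one, coeff_X_pow, -map_div₀, -map_mul, -map_sub, -map_add, -map_pow, -map_natCast]
    · rw [h5]; simp [coeff_X, coeff_one, coeff_X_pow, -map_div₀, -map_mul, -map_sub, -map_add, -map_pow, -map_natCast]
end

section
/- Let m ∈ ℚ and let r₁, …, r_s ∈ ℚ be a finite family with elementary symmetric functions e₁, …, e₅ (where e_j = 0 if j > s). For r ∈ ℚ set F(r) := 1 − r(2 − 3r + r² − 12m + 3rm + 6m²)H⁶/6! + 3r(−12 + 2r − 2r² + r³ + 10m − 8rm + 3r²m − 20m² + 6rm² + 10m³)H⁷/7! − 3r(−64 + 2r² − 3r³ + 2r⁴ + 10rm − 12r²m + 6r³m + 30m² − 30rm² + 12r²m² − 60m³ + 20rm³ + 30m⁴)H⁸/8!. Then ( 1 − m²(m−1)(m−2)(m² + 3m − 3)( H⁶/720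 − mH⁷/840 + m²H⁸/1920 ) )·∏ᵢ F(rᵢ) ≡ 1 + c₆H⁶/6! + c₇H⁷/7! + c₈H⁸/8! (mod H⁹), where c₆ = −2e₁ + 3e₁² − e₁³ − 6e₂ + 3e₁e₂ − 3e₃ + 12e₁m − 3e₁²m + 6e₂m + 6m² − 6e₁m² − 15m³ + 10m⁴ − m⁶; c₇ = −36e₁ + 6e₁² − 6e₁³ + 3e₁⁴ − 12e₂ + 18e₁e₂ − 12e₁²e₂ + 6e₂² − 18e₃ + 12e₁e₃ − 12e₄ + 30e₁m − 24e₁²m + 9e₁³m + 48e₂m − 27e₁e₂m + 27e₃m − 60e₁m² + 18e₁²m² − 36e₂m² − 36m³ + 30e₁m³ + 90m⁴ − 60m⁵ + 6m⁷; c₈ = 192e₁ − 6e₁³ + 9e₁⁴ − 6e₁⁵ + 18e₁e₂ − 36e₁²e₂ + 30e₁³e₂ + 18e₂² − 30e₁e₂² − 18e₃ + 36e₁e₃ − 30e₁²e₃ + 30e₂e₃ − 36e₄ + 30e₁e₄ − 30e₅ − 30e₁²m + 36e₁³m − 18e₁⁴m + 60e₂m − 108e₁e₂m + 72e₁²e₂m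 − 36e₂²m + 108e₃m − 72e₁e₃m + 72e₄m − 90e₁m² + 90e₁²m² − 36e₁³m² − 180e₂m² + 108e₁e₂m² − 108e₃m² + 180e₁m³ − 60e₁²m³ + 120e₂m³ + 126m⁴ − 90e₁m⁴ − 315m⁵ + 210m⁶ − 21m⁸. (This is the reformulation, in elementary symmetric functions, of the multiplicative contribution of an ordinary multiple point given after Proposition 4.1 of the paper.) -/
open Polynomial

/-- The multiplicative factor `F(r)` of Proposition 4.1, for a branch whose tangent line
meets the curve with multiplicity `r` at an ordinary multiple point of multiplicity `m`. -/
noncomputable def Ffactor (m r : ℚ) : Polynomial ℚ :=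
  1 - C (r * (2 - 3 * r + r ^ 2 - 12 * m + 3 * r * m + 6 * m ^ 2) / 720) * X ^ 6
    + C (3 * r * (-12 + 2 * r - 2 * r ^ 2 + r ^ 3 + 10 * m - 8 * r * m + 3 * r ^ 2 * m
        - 20 * m ^ 2 + 6 * r * m ^ 2 + 10 * m ^ 3) / 5040) * X ^ 7
    - C (3 * r * (-64 + 2 * r ^ 2 - 3 * r ^ 3 + 2 * r ^ 4 + 10 * r * m - 12 * r ^ 2 * m
        + 6 * r ^ 3 * m + 30 * m ^ 2 - 30 * r * m ^ 2 + 12 * r ^ 2 * m ^ 2 - 60 * m ^ 3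
        + 20 * r * m ^ 3 + 30 * m ^ 4) / 40320) * X ^ 8

/-- Coefficient of `H^6` times `6!` in the product of the branch factors. -/
def branchC6 (m e1 e2 e3 e4 e5 : ℚ) : ℚ :=
  -2 * e1 + 3 * e1 ^ 2 - e1 ^ 3 - 6 * e2 + 3 * e1 * e2 - 3 * e3 + 12 * e1 * m
            - 3 * e1 ^ 2 * m + 6 * e2 * m - 6 * e1 * m ^ 2 

/-- Coefficient of `H^7` times `7!` in the product of the branch factors. -/
def branchC7 (m e1 e2 e3 e4 e5 : ℚ) : ℚ :=
  -36 * e1 + 6 * e1 ^ 2 - 6 * e1 ^ 3 + 3 * e1 ^ 4 - 12 * e2 + 18 * e1 * e2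
            - 12 * e1 ^ 2 * e2 + 6 * e2 ^ 2 - 18 * e3 + 12 * e1 * e3 - 12 * e4 + 30 * e1 * m
            - 24 * e1 ^ 2 * m + 9 * e1 ^ 3 * m + 48 * e2 * m - 27 * e1 * e2 * m + 27 * e3 * m
            - 60 * e1 * m ^ 2 + 18 * e1 ^ 2 * m ^ 2 - 36 * e2 * m ^ 2             + 30 * e1 * m ^ 3 

/-- Coefficient of `H^8` times `8!` in the product of the branch factors. -/
def branchC8 (m e1 e2 e3 e4 e5 : ℚ) : ℚ :=
  192 * e1 - 6 * e1 ^ 3 + 9 * e1 ^ 4 - 6 * e1 ^ 5 + 18 * e1 * e2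
            - 36 * e1 ^ 2 * e2 + 30 * e1 ^ 3 * e2 + 18 * e2 ^ 2 - 30 * e1 * e2 ^ 2 - 18 * e3
            + 36 * e1 * e3 - 30 * e1 ^ 2 * e3 + 30 * e2 * e3 - 36 * e4 + 30 * e1 * e4
            - 30 * e5 - 30 * e1 ^ 2 * m + 36 * e1 ^ 3 * m - 18 * e1 ^ 4 * m + 60 * e2 * m
            - 108 * e1 * e2 * m + 72 * e1 ^ 2 * e2 * m - 36 * e2 ^ 2 * m + 108 * e3 * m
            - 72 * e1 * e3 * m + 72 * e4 * m - 90 * e1 * m ^ 2 + 90 * e1 ^ 2 * m ^ 2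
            - 36 * e1 ^ 3 * m ^ 2 - 180 * e2 * m ^ 2 + 108 * e1 * e2 * m ^ 2
            - 108 * e3 * m ^ 2 + 180 * e1 * m ^ 3 - 60 * e1 ^ 2 * m ^ 3 + 120 * e2 * m ^ 3
            - 90 * e1 * m ^ 4 


theorem esymm_cons_succ (a : ℚ) (s : Multiset ℚ) (n : ℕ) :
    (a ::ₘ s).esymm (n + 1) = s.esymm (n + 1) + a * s.esymm n := by
  simp [Multiset.esymm, Multiset.powersetCard_cons, Multiset.map_map, Function.comp_def,
    Multiset.sum_map_mul_left]

theorem prod_form (m : ℚ) (r : Multiset ℚ) :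
    ∃ Q : Polynomial ℚ, (r.map (Ffactor m)).prod = 1
      + C (branchC6 m (r.esymm 1) (r.esymm 2) (r.esymm 3) (r.esymm 4) (r.esymm 5) / 720) * X ^ 6
      + C (branchC7 m (r.esymm 1) (r.esymm 2) (r.esymm 3) (r.esymm 4) (r.esymm 5) / 5040) * X ^ 7
      + C (branchC8 m (r.esymm 1) (r.esymm 2) (r.esymm 3) (r.esymm 4) (r.esymm 5) / 40320) * X ^ 8
      + X ^ 9 * Q := by
  induction r using Multiset.induction with
  | empty =>
    refine ⟨0, ?_⟩
    simp [Multiset.esymm, Multiset.powersetCard_zero_right, branchC6, branchC7, branchC8]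
  | cons a s ih =>
    obtain ⟨Q, hQ⟩ := ih
    rw [Multiset.map_cons, Multiset.prod_cons, hQ]
    have h0 : s.esymm 0 = 1 := by simp [Multiset.esymm]
    have h1 := esymm_cons_succ a s 0
    have h2 := esymm_cons_succ a s 1
    have h3 := esymm_cons_succ a s 2
    have h4 := esymm_cons_succ a s 3
    have h5 := esymm_cons_succ a s 4
    norm_num only at h1 h2 h3 h4 h5
    rw [h1, h2, h3, h4, h5, h0]
    generalize s.esymm 1 = e1
    generalize s.esymm 2 = e2
    generalize s.esymm 3 = e3
    generalize s.esymm 4 = e4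
    generalize s.esymm 5 = e5
    obtain ⟨f6, hf6⟩ : ∃ x, x = a * (2 - 3 * a + a ^ 2 - 12 * m + 3 * a * m + 6 * m ^ 2) / 720 := ⟨_, rfl⟩
    obtain ⟨f7, hf7⟩ : ∃ x, x = 3 * a * (-12 + 2 * a - 2 * a ^ 2 + a ^ 3 + 10 * m - 8 * a * m + 3 * a ^ 2 * m
        - 20 * m ^ 2 + 6 * a * m ^ 2 + 10 * m ^ 3) / 5040 := ⟨_, rfl⟩
    obtain ⟨f8, hf8⟩ : ∃ x, x = 3 * a * (-64 + 2 * a ^ 2 - 3 * a ^ 3 + 2 * a ^ 4 + 10 * a * m - 12 * a ^ 2 * m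
        + 6 * a ^ 3 * m + 30 * m ^ 2 - 30 * a * m ^ 2 + 12 * a ^ 2 * m ^ 2 - 60 * m ^ 3
        + 20 * a * m ^ 3 + 30 * m ^ 4) / 40320 := ⟨_, rfl⟩
    have hF : Ffactor m a = 1 - C f6 * X ^ 6 + C f7 * X ^ 7 - C f8 * X ^ 8 := by
      rw [hf6, hf7, hf8, Ffactor]
    have g6 : branchC6 m (e1 + a * 1) (e2 + a * e1) (e3 + a * e2) (e4 + a * e3) (e5 + a * e4) / 720
        = branchC6 m e1 e2 e3 e4 e5 / 720 - f6 := by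
      rw [hf6]; simp only [branchC6]; ring
    have g7 : branchC7 m (e1 + a * 1) (e2 + a * e1) (e3 + a * e2) (e4 + a * e3) (e5 + a * e4) / 5040
        = branchC7 m e1 e2 e3 e4 e5 / 5040 + f7 := by
      rw [hf7]; simp only [branchC7]; ring
    have g8 : branchC8 m (e1 + a * 1) (e2 + a * e1) (e3 + a * e2) (e4 + a * e3) (e5 + a * e4) / 40320
        = branchC8 m e1 e2 e3 e4 e5 / 40320 - f8 := by
      rw [hf8]; simp only [branchC8]; ring
    rw [hF, g6, g7, g8]
    generalize branchC6 m e1 e2 e3 e4 e5 / 720 = b6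
    generalize branchC7 m e1 e2 e3 e4 e5 / 5040 = b7
    generalize branchC8 m e1 e2 e3 e4 e5 / 40320 = b8
    refine ⟨(- C f6 + C f7 * X - C f8 * X ^ 2) * (C b6 + C b7 * X + C b8 * X ^ 2) * X ^ 3
      + (1 - C f6 * X ^ 6 + C f7 * X ^ 7 - C f8 * X ^ 8) * Q, ?_⟩
    simp only [C_add, C_sub]
    ring

/-- The multiplicative contribution of an ordinary multiple point, rewritten in the
elementary symmetric functions `e₁,…,e₅` of the intersection multiplicities `rᵢ`
(formula following Proposition 4.1). -/
theorem stmt_8 (m : ℚ) (r : Multiset ℚ)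
    (e1 e2 e3 e4 e5 : ℚ)
    (he1 : e1 = r.esymm 1) (he2 : e2 = r.esymm 2) (he3 : e3 = r.esymm 3)
    (he4 : e4 = r.esymm 4) (he5 : e5 = r.esymm 5) :
    ∀ k ≤ 8,
      (((1 : Polynomial ℚ) - C (m ^ 2 * (m - 1) * (m - 2) * (m ^ 2 + 3 * m - 3)) *
          (C (1 / 720 : ℚ) * X ^ 6 - C (m / 840) * X ^ 7 + C (m ^ 2 / 1920) * X ^ 8)) *
        (r.map (Ffactor m)).prod).coeff k
      = (1 + C ((-2 * e1 + 3 * e1 ^ 2 - e1 ^ 3 - 6 * e2 + 3 * e1 * e2 - 3 * e3 + 12 * e1 * m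
            - 3 * e1 ^ 2 * m + 6 * e2 * m + 6 * m ^ 2 - 6 * e1 * m ^ 2 - 15 * m ^ 3
            + 10 * m ^ 4 - m ^ 6) / 720) * X ^ 6
          + C ((-36 * e1 + 6 * e1 ^ 2 - 6 * e1 ^ 3 + 3 * e1 ^ 4 - 12 * e2 + 18 * e1 * e2
            - 12 * e1 ^ 2 * e2 + 6 * e2 ^ 2 - 18 * e3 + 12 * e1 * e3 - 12 * e4 + 30 * e1 * m
            - 24 * e1 ^ 2 * m + 9 * e1 ^ 3 * m + 48 * e2 * m - 27 * e1 * e2 * m + 27 * e3 * m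
            - 60 * e1 * m ^ 2 + 18 * e1 ^ 2 * m ^ 2 - 36 * e2 * m ^ 2 - 36 * m ^ 3
            + 30 * e1 * m ^ 3 + 90 * m ^ 4 - 60 * m ^ 5 + 6 * m ^ 7) / 5040) * X ^ 7
          + C ((192 * e1 - 6 * e1 ^ 3 + 9 * e1 ^ 4 - 6 * e1 ^ 5 + 18 * e1 * e2
            - 36 * e1 ^ 2 * e2 + 30 * e1 ^ 3 * e2 + 18 * e2 ^ 2 - 30 * e1 * e2 ^ 2 - 18 * e3
            + 36 * e1 * e3 - 30 * e1 ^ 2 * e3 + 30 * e2 * e3 - 36 * e4 + 30 * e1 * e4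
            - 30 * e5 - 30 * e1 ^ 2 * m + 36 * e1 ^ 3 * m - 18 * e1 ^ 4 * m + 60 * e2 * m
            - 108 * e1 * e2 * m + 72 * e1 ^ 2 * e2 * m - 36 * e2 ^ 2 * m + 108 * e3 * m
            - 72 * e1 * e3 * m + 72 * e4 * m - 90 * e1 * m ^ 2 + 90 * e1 ^ 2 * m ^ 2
            - 36 * e1 ^ 3 * m ^ 2 - 180 * e2 * m ^ 2 + 108 * e1 * e2 * m ^ 2
            - 108 * e3 * m ^ 2 + 180 * e1 * m ^ 3 - 60 * e1 ^ 2 * m ^ 3 + 120 * e2 * m ^ 3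
            + 126 * m ^ 4 - 90 * e1 * m ^ 4 - 315 * m ^ 5 + 210 * m ^ 6
            - 21 * m ^ 8) / 40320) * X ^ 8).coeff k := by
  intro k hk
  obtain ⟨Q, hQ⟩ := prod_form m r
  rw [hQ, ← he1, ← he2, ← he3, ← he4, ← he5]
  obtain ⟨d, hd⟩ : ∃ x, x = m ^ 2 * (m - 1) * (m - 2) * (m ^ 2 + 3 * m - 3) := ⟨_, rfl⟩
  rw [← hd]
  obtain ⟨b6, hb6⟩ : ∃ x, x = branchC6 m e1 e2 e3 e4 e5 / 720 := ⟨_, rfl⟩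
  obtain ⟨b7, hb7⟩ : ∃ x, x = branchC7 m e1 e2 e3 e4 e5 / 5040 := ⟨_, rfl⟩
  obtain ⟨b8, hb8⟩ : ∃ x, x = branchC8 m e1 e2 e3 e4 e5 / 40320 := ⟨_, rfl⟩
  rw [← hb6, ← hb7, ← hb8]
  have key : ((1 : Polynomial ℚ) - C d *
          (C (1 / 720 : ℚ) * X ^ 6 - C (m / 840) * X ^ 7 + C (m ^ 2 / 1920) * X ^ 8)) *
        (1 + C b6 * X ^ 6 + C b7 * X ^ 7 + C b8 * X ^ 8 + X ^ 9 * Q)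
      = 1 + C (b6 - d * (1 / 720)) * X ^ 6 + C (b7 + d * (m / 840)) * X ^ 7
        + C (b8 - d * (m ^ 2 / 1920)) * X ^ 8
        + X ^ 9 * (- C d * (C (1 / 720 : ℚ) - C (m / 840) * X + C (m ^ 2 / 1920) * X ^ 2)
            * (C b6 + C b7 * X + C b8 * X ^ 2) * X ^ 3
          + ((1 : Polynomial ℚ) - C d *
          (C (1 / 720 : ℚ) * X ^ 6 - C (m / 840) * X ^ 7 + C (m ^ 2 / 1920) * X ^ 8)) * Q) := by
    simp only [C_add, C_sub, C_mul]
    ring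
  rw [key, coeff_add, coeff_X_pow_mul', if_neg (by omega), add_zero]
  congr 5
  · congr 2
    rw [hb6, hd]; simp only [branchC6]; ring
  · congr 1
    rw [hb7, hd]; simp only [branchC7]; ring
  · rw [hb8, hd]; simp only [branchC8]; ring
end

section
/- Let F := 1 − H⁶/48 + 3H⁷/70 − 197H⁸/4480. For a natural number m ≥ 1 set K_m := ( 1 − m(m³ + m² + m + 16)H⁶/6! + 3(2m⁵ + 2m⁴ + 2m³ + 37m² + 16m + 11)H⁷/7! − 21(m⁶ + m⁵ + m⁴ + 21m³ + 13m² + 17m + 9)H⁸/8! )^{m(m−1)}. Then for every d ∈ ℚ, 8!·(the coefficient of H⁸ in e(dH)·(K_m − F^{3m(m−1)}), computed modulo H⁹) = −m(m−1)·(21m⁶ − 48dm⁵ + 21m⁵ + 28d²m⁴ − 48dm⁴ + 21m⁴ + 28d²m³ − 48dm³ + 441m³ + 28d²m² − 888dm² + 273m² + 448d²m − 384dm + 357m − 1260d² + 4920d − 5130). (This is the computation of Example 4.2 of the paper: the correction to the predegree of a degree-d curve due to an ordinary m-fold point with smooth, non-linear, non-inflectional branches, which absorbs 3m(m−1) flexes.)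 -/
open Polynomial

/-- The multiplicative contribution of one ordinary flex. -/
noncomputable def Fflex : Polynomial ℚ :=
  1 - C (1 / 48 : ℚ) * X ^ 6 + C (3 / 70 : ℚ) * X ^ 7 - C (197 / 4480 : ℚ) * X ^ 8

/-- The multiplicative contribution of an ordinary `m`-fold point with smooth, non-linear,
non-inflectional branches (Example 4.2). -/
noncomputable def Km (m : ℕ) : Polynomial ℚ :=
  (1 - C ((m : ℚ) * ((m : ℚ) ^ 3 + (m : ℚ) ^ 2 + (m : ℚ) + 16) / 720) * X ^ 6
    + C (3 * (2 * (m : ℚ) ^ 5 + 2 * (m : ℚ) ^ 4 + 2 * (m : ℚ) ^ 3 + 37 * (m : ℚ) ^ 2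
        + 16 * (m : ℚ) + 11) / 5040) * X ^ 7
    - C (21 * ((m : ℚ) ^ 6 + (m : ℚ) ^ 5 + (m : ℚ) ^ 4 + 21 * (m : ℚ) ^ 3 + 13 * (m : ℚ) ^ 2
        + 17 * (m : ℚ) + 9) / 40320) * X ^ 8) ^ (m * (m - 1))

theorem pow_trunc (a b c : ℚ) (n : ℕ) : ∃ r : Polynomial ℚ,
    (1 - C a * X ^ 6 + C b * X ^ 7 - C c * X ^ 8) ^ n
      = 1 - C (n * a) * X ^ 6 + C (n * b) * X ^ 7 - C (n * c) * X ^ 8 + r * X ^ 9 := by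
  induction n with
  | zero => exact ⟨0, by simp⟩
  | succ n ih =>
    obtain ⟨r, hr⟩ := ih
    refine ⟨r * (1 - C a * X ^ 6 + C b * X ^ 7 - C c * X ^ 8)
      + C (n : ℚ) * X ^ 3 * (C a - C b * X + C c * X ^ 2) ^ 2, ?_⟩
    rw [pow_succ, hr]
    push_cast
    simp only [C_mul, C_add, C_1]
    ring

theorem coeff_trunc (d a b c a' b' c' : ℚ) (r r' : Polynomial ℚ) :
    (eH d * ((1 - C a * X ^ 6 + C b * X ^ 7 - C c * X ^ 8 + r * X ^ 9)
      - (1 - C a' * X ^ 6 + C b' * X ^ 7 - C c' * X ^ 8 + r' * X ^ 9))).coeff 8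
      = (a' - a) * d ^ 2 / 2 + (b - b') * d + (c' - c) := by
  have h : eH d * ((1 - C a * X ^ 6 + C b * X ^ 7 - C c * X ^ 8 + r * X ^ 9)
      - (1 - C a' * X ^ 6 + C b' * X ^ 7 - C c' * X ^ 8 + r' * X ^ 9))
      = C (a' - a) * (eH d * X ^ 6) + C (b - b') * (eH d * X ^ 7)
        + C (c' - c) * (eH d * X ^ 8) + (eH d * (r - r')) * X ^ 9 := by
    simp only [C_sub]
    ring
  have h0 : (eH d).coeff 0 = 1 := by
    simp [eH, Finset.sum_range_succ, coeff_X, coeff_X_pow]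
  have h1 : (eH d).coeff 1 = d := by
    simp [eH, Finset.sum_range_succ, coeff_X, coeff_X_pow, coeff_one]
  have h2 : (eH d).coeff 2 = d ^ 2 / 2 := by
    simp [eH, Finset.sum_range_succ, coeff_X, coeff_X_pow, coeff_one]
  rw [h]
  simp only [coeff_add, coeff_C_mul, coeff_mul_X_pow']
  norm_num [h0, h1, h2]
  ring

/-- Example 4.2: the correction to the predegree of a degree-`d` curve due to an ordinary
`m`-fold point with smooth, non-linear, non-inflectional branches, which absorbs
`3m(m−1)` flexes. -/
theorem stmt_11 (m : ℕ) (hm : 1 ≤ m) (d : ℚ) :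
    (Nat.factorial 8 : ℚ) * ((eH d * (Km m - Fflex ^ (3 * m * (m - 1)))).coeff 8)
    = -(m : ℚ) * ((m : ℚ) - 1) *
        (21 * (m : ℚ) ^ 6 - 48 * d * (m : ℚ) ^ 5 + 21 * (m : ℚ) ^ 5
          + 28 * d ^ 2 * (m : ℚ) ^ 4 - 48 * d * (m : ℚ) ^ 4 + 21 * (m : ℚ) ^ 4
          + 28 * d ^ 2 * (m : ℚ) ^ 3 - 48 * d * (m : ℚ) ^ 3 + 441 * (m : ℚ) ^ 3
          + 28 * d ^ 2 * (m : ℚ) ^ 2 - 888 * d * (m : ℚ) ^ 2 + 273 * (m : ℚ) ^ 2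
          + 448 * d ^ 2 * (m : ℚ) - 384 * d * (m : ℚ) + 357 * (m : ℚ)
          - 1260 * d ^ 2 + 4920 * d - 5130) := by
  obtain ⟨r, hr⟩ := pow_trunc ((m : ℚ) * ((m : ℚ) ^ 3 + (m : ℚ) ^ 2 + (m : ℚ) + 16) / 720)
    (3 * (2 * (m : ℚ) ^ 5 + 2 * (m : ℚ) ^ 4 + 2 * (m : ℚ) ^ 3 + 37 * (m : ℚ) ^ 2
        + 16 * (m : ℚ) + 11) / 5040)
    (21 * ((m : ℚ) ^ 6 + (m : ℚ) ^ 5 + (m : ℚ) ^ 4 + 21 * (m : ℚ) ^ 3 + 13 * (m : ℚ) ^ 2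
        + 17 * (m : ℚ) + 9) / 40320) (m * (m - 1))
  obtain ⟨r', hr'⟩ := pow_trunc (1 / 48) (3 / 70) (197 / 4480) (3 * m * (m - 1))
  rw [Km, Fflex, hr, hr', coeff_trunc]
  have h8 : ((Nat.factorial 8 : ℕ) : ℚ) = 40320 := by norm_num [Nat.factorial]
  rw [h8]
  push_cast [Nat.cast_sub hm]
  ring
end

section
/- Let F := 1 − H⁶/48 + 3H⁷/70 − 197H⁸/4480 and C := 1 − 4H⁶/15 + 3H⁷/5 − 19H⁸/28 (the multiplicative contribution of an ordinary (2,3)-cusp). Then for every d ∈ ℚ, 8!·(the coefficient of H⁸ in e(dH)·(C − F⁸)) = −72·(28d² − 144d + 183). (This is the computation of Example 5.2 of the paper: the correction to the predegree of a degree-d curve due to an ordinary cusp, which absorbs 8 flexes.) -/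
open Polynomial

/-- The multiplicative contribution of an ordinary (2,3)-cusp. -/
noncomputable def Ccusp : Polynomial ℚ :=
  1 - C (4 / 15 : ℚ) * X ^ 6 + C (3 / 5 : ℚ) * X ^ 7 - C (19 / 28 : ℚ) * X ^ 8

/-- Example 5.2: the correction to the predegree of a degree-`d` curve due to an ordinary
cusp, which absorbs 8 flexes. -/
theorem stmt_13 (d : ℚ) :
    (Nat.factorial 8 : ℚ) * ((eH d * (Ccusp - Fflex ^ 8)).coeff 8)
      = -72 * (28 * d ^ 2 - 144 * d + 183) := by
  have hF : ∃ R : Polynomial ℚ, Fflex ^ 8 = 1 + C (8 : ℚ) * (Fflex - 1) + R * X ^ 9 := by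
    have h1 : Fflex = 1 + X ^ 6 * (-C (1 / 48 : ℚ) + C (3 / 70 : ℚ) * X - C (197 / 4480 : ℚ) * X ^ 2) := by
      unfold Fflex; ring
    generalize (-C (1 / 48 : ℚ) + C (3 / 70 : ℚ) * X - C (197 / 4480 : ℚ) * X ^ 2) = u at h1
    have h8 : (C (8 : ℚ) : Polynomial ℚ) = 8 := rfl
    rw [h1, h8]
    refine ⟨X ^ 3 * u ^ 2 * (28 + 56 * (X ^ 6 * u) + 70 * (X ^ 6 * u) ^ 2 + 56 * (X ^ 6 * u) ^ 3
      + 28 * (X ^ 6 * u) ^ 4 + 8 * (X ^ 6 * u) ^ 5 + (X ^ 6 * u) ^ 6), ?_⟩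
    ring
  obtain ⟨R, hR⟩ := hF
  have key : eH d * (Ccusp - Fflex ^ 8)
      = (eH d * C (-4 / 15 + 8 / 48 : ℚ)) * X ^ 6 + (eH d * C (3 / 5 - 8 * (3 / 70) : ℚ)) * X ^ 7
        + (eH d * C (-19 / 28 + 8 * (197 / 4480) : ℚ)) * X ^ 8 + (-(eH d * R)) * X ^ 9 := by
    have e1 : (-4 / 15 + 8 / 48 : ℚ) = -(4 / 15) + 8 * (1 / 48) := by norm_num
    have e2 : (-19 / 28 + 8 * (197 / 4480) : ℚ) = -(19 / 28) + 8 * (197 / 4480) := by norm_num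
    rw [hR, e1, e2]
    unfold Ccusp Fflex
    simp only [C_add, C_sub, C_mul, C_neg]
    ring
  have hc : ∀ n, n < 9 → (eH d).coeff n = d ^ n / (Nat.factorial n : ℚ) := by
    intro n hn
    simp [eH, coeff_C_mul, coeff_X_pow, hn]
  rw [key]
  simp only [coeff_add, coeff_mul_X_pow', coeff_mul_C]
  norm_num [hc, Nat.factorial]
  ring
end
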